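/- Let Γ be a reduced, non-ascending labeled graph with all labels positive, let e, f be mobile edges of Γ with f ∉ {e, ē}, and let A, A′, B, B′ be edge paths none of whose edges lies in {e, ē, f, f̄}. Then none of the following two-step slide sequences can be performed (with every single slide valid and every intermediate labeled graph reduced): (1) slide e over the concatenated path A·f·A′, then slide f over B·e·B′; (2) slide e over A·f·A′, then slide f over B·ē·B′; (3) slide e over A·f̄·A′, then slide f over B·ē·B′. (In the second slide of each sequence, e and ē are taken in their new position after the first slide.) -/

import Mathlib

/-! Labeled graphs in the sense of generalized Baumslag–Solitar theory. -/

structure LGraph (V E : Type) where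
  o : E → V
  bar : E → E
  bar_bar : ∀ e, bar (bar e) = e
  bar_ne : ∀ e, bar e ≠ e
  lab : E → ℤ

namespace LGraph

variable {V E V' E' : Type}

/-- Terminal vertex of an oriented edge. -/
def t (G : LGraph V E) (e : E) : V := G.o (G.bar e)

/-- All labels are positive. -/
def Positive (G : LGraph V E) : Prop := ∀ e : E, 0 < G.lab e

/-- No collapsible edge: every label-1 edge is a loop. -/
def Reduced (G : LGraph V E) : Prop := ∀ e : E, G.lab e = 1 → G.o e = G.t e

/-- An `n`-rose: one vertex and `n` pairs of oriented edges. -/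
def IsRose (G : LGraph V E) (n : ℕ) : Prop :=
  Nat.card V = 1 ∧ Nat.card E = 2 * n

/-- Modulus of a single oriented edge: `λ(ē)/λ(e)`. -/
def qe (G : LGraph V E) (e : E) : ℚ := (G.lab (G.bar e) : ℚ) / (G.lab e : ℚ)

/-- Modulus of an edge path. -/
def q (G : LGraph V E) (l : List E) : ℚ := (l.map G.qe).prod

/-- Consecutive edges match up. -/
def IsEdgePath (G : LGraph V E) (l : List E) : Prop :=
  List.Chain' (fun a b => G.t a = G.o b) l

/-- An `e`-edge path. -/
def IsEEdgePath (G : LGraph V E) (e : E) (l : List E) : Prop :=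
  G.IsEdgePath l ∧
  (∀ a ∈ l, a ≠ e ∧ a ≠ G.bar e) ∧
  (∀ a ∈ l.head?, G.o a = G.o e) ∧
  ∀ i : Fin l.length, ∃ k : ℤ,
    (G.lab e : ℚ) * G.q (l.take i.1) = (k : ℚ) * (G.lab (l.get i) : ℚ)

/-- A monotone cycle `(e₁,…,eₛ,e)`. -/
def IsMonotoneCycle (G : LGraph V E) (l : List E) (e : E) : Prop :=
  G.IsEEdgePath (G.bar e) l ∧
  G.t (l.getLastD e) = G.o e ∧
  ∃ k : ℤ, G.q (l ++ [e]) = (k : ℚ)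

/-- A strict monotone cycle. -/
def IsStrictMonotoneCycle (G : LGraph V E) (l : List E) (e : E) : Prop :=
  G.IsMonotoneCycle l e ∧ G.q (l ++ [e]) ≠ 1

def HasStrictMonotoneCycle (G : LGraph V E) : Prop :=
  ∃ (l : List E) (e : E), G.IsStrictMonotoneCycle l e

/-- A strict `e`-integer cycle. -/
def IsStrictIntegerCycle (G : LGraph V E) (e : E) (l : List E) : Prop :=
  G.IsEEdgePath e l ∧ l ≠ [] ∧
  G.t (l.getLastD e) = G.o (l.headD e) ∧
  (∃ k : ℤ, G.q l = (k : ℚ)) ∧ G.q l ≠ 1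

/-- A mobile edge. -/
def Mobile (G : LGraph V E) (e : E) : Prop :=
  (∃ l, G.IsStrictMonotoneCycle l e ∨ G.IsStrictMonotoneCycle l (G.bar e)) ∨
  (∃ l, G.IsStrictIntegerCycle e l ∨ G.IsStrictIntegerCycle (G.bar e) l)

/-- The single slide of `e` over `f` is permitted. -/
def CanSlide (G : LGraph V E) (e f : E) : Prop :=
  f ≠ e ∧ f ≠ G.bar e ∧ G.o f = G.o e ∧ G.lab f ∣ G.lab e

open Classical in
/-- The result of the single slide of `e` over `f`. -/
noncomputable def slide (G : LGraph V E) (e f : E) : LGraph V E where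
  o := fun x => if x = e then G.t f else G.o x
  bar := G.bar
  bar_bar := G.bar_bar
  bar_ne := G.bar_ne
  lab := fun x => if x = e then G.lab e * G.lab (G.bar f) / G.lab f else G.lab x

/-- Successively slide `e` over the edges of a path. -/
noncomputable def slidePath : LGraph V E → E → List E → LGraph V E
  | G, _, [] => G
  | G, e, f :: l => slidePath (G.slide e f) e l

/-- Each single slide in the successive slide of `e` over a path is permitted. -/
def CanSlidePath : LGraph V E → E → List E → Prop
  | _, _, [] => True
  | G, e, f :: l => G.CanSlide e f ∧ CanSlidePath (G.slide e f) e l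

/-- Each single slide is permitted and each intermediate graph is reduced. -/
def GoodSlidePath : LGraph V E → E → List E → Prop
  | _, _, [] => True
  | G, e, f :: l => G.CanSlide e f ∧ (G.slide e f).Reduced ∧ GoodSlidePath (G.slide e f) e l

/-- Perform a finite sequence of single slides, given as pairs (slid edge, edge slid over). -/
noncomputable def slideSeq : LGraph V E → List (E × E) → LGraph V E
  | G, [] => G
  | G, p :: rest => slideSeq (G.slide p.1 p.2) rest

/-- A sequence of permitted single slides, each sliding a mobile edge. -/
def MobileSlideSeq : LGraph V E → List (E × E) → Prop
  | _, [] => True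
  | G, p :: rest => G.Mobile p.1 ∧ G.CanSlide p.1 p.2 ∧ MobileSlideSeq (G.slide p.1 p.2) rest

/-- Isomorphism of labeled graphs. -/
def Isom (G : LGraph V E) (G' : LGraph V' E') : Prop :=
  ∃ (φ : V → V') (Φ : E → E'),
    Function.Bijective φ ∧ Function.Bijective Φ ∧
    (∀ x, G'.o (Φ x) = φ (G.o x)) ∧
    (∀ x, G'.bar (Φ x) = Φ (G.bar x)) ∧
    (∀ x, G'.lab (Φ x) = G.lab x)

open Classical in
/-- The result of the induction move at the loop `e` with multiplier `m`. -/
noncomputable def inductionMove (G : LGraph V E) (e : E) (m : ℤ) : LGraph V E where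
  o := G.o
  bar := G.bar
  bar_bar := G.bar_bar
  bar_ne := G.bar_ne
  lab := fun x => if x ≠ e ∧ x ≠ G.bar e ∧ G.o x = G.o e then m * G.lab x else G.lab x

/-- `G'` is obtained from `G` by a single slide move (up to isomorphism). -/
def IsSlideMove (G : LGraph V E) (G' : LGraph V' E') : Prop :=
  ∃ e f, G.CanSlide e f ∧ Isom G' (G.slide e f)

/-- `G'` is obtained from `G` by a (forward) induction move. -/
def IsInductionMove (G : LGraph V E) (G' : LGraph V' E') : Prop :=
  ∃ (e : E) (m : ℤ), G.o e = G.t e ∧ G.lab e = 1 ∧ 1 ≤ m ∧ m ∣ G.lab (G.bar e) ∧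
    Isom G' (G.inductionMove e m)

/-- `G'` is obtained from `G` by an A-move. -/
def IsAMove (G : LGraph V E) (G' : LGraph V' E') : Prop :=
  ∃ (e d : E) (e' : E') (φ : V → V') (Φ : E → E'),
    G.o e = G.t e ∧ G.lab e = 1 ∧ G.lab (G.bar e) ≠ 1 ∧
    G.o d = G.o e ∧ G.t d ≠ G.o e ∧
    G.lab d ≠ 1 ∧ G.lab (G.bar d) ≠ 1 ∧ G.lab d ∣ G.lab (G.bar e) ∧
    (∀ x : E, G.o x = G.o e → x = e ∨ x = G.bar e ∨ x = d) ∧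
    G'.o e' = φ (G.t d) ∧ G'.t e' = φ (G.t d) ∧
    G'.lab e' = G.lab (G.bar d) ∧
    G'.lab (G'.bar e') = G.lab (G.bar d) * G.lab (G.bar e) ∧
    (∀ w₁ w₂ : V, w₁ ≠ G.o e → w₂ ≠ G.o e → φ w₁ = φ w₂ → w₁ = w₂) ∧
    (∀ v' : V', ∃ w : V, w ≠ G.o e ∧ φ w = v') ∧
    (∀ x : E, x ≠ e → x ≠ G.bar e → x ≠ d → x ≠ G.bar d →
      Φ x ≠ e' ∧ Φ x ≠ G'.bar e' ∧
      G'.o (Φ x) = φ (G.o x) ∧ G'.bar (Φ x) = Φ (G.bar x) ∧ G'.lab (Φ x) = G.lab x) ∧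
    (∀ x y : E, x ≠ e → x ≠ G.bar e → x ≠ d → x ≠ G.bar d →
      y ≠ e → y ≠ G.bar e → y ≠ d → y ≠ G.bar d → Φ x = Φ y → x = y) ∧
    (∀ y : E', y ≠ e' → y ≠ G'.bar e' →
      ∃ x : E, x ≠ e ∧ x ≠ G.bar e ∧ x ≠ d ∧ x ≠ G.bar d ∧ Φ x = y)

/-- A strict ascending loop: a loop with `λ(e) = 1 ≠ λ(ē)`. -/
def HasStrictAscendingLoop (G : LGraph V E) : Prop :=
  ∃ e : E, G.o e = G.t e ∧ G.lab e = 1 ∧ G.lab (G.bar e) ≠ 1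

end LGraph

/-- A labeled graph with its vertex and edge types bundled. -/
structure BGraph where
  V : Type
  E : Type
  G : LGraph V E

/-- An elementary deformation move: a slide, an induction move or its inverse,
or an A-move or its inverse. -/
def BGraph.ElemMove (X Y : BGraph) : Prop :=
  LGraph.IsSlideMove X.G Y.G ∨ LGraph.IsInductionMove X.G Y.G ∨
  LGraph.IsInductionMove Y.G X.G ∨ LGraph.IsAMove X.G Y.G ∨ LGraph.IsAMove Y.G X.G

/-- A finite sequence of elementary moves with all intermediate graphs reduced. -/
def BGraph.MoveSeq : BGraph → BGraph → Prop :=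
  Relation.ReflTransGen (fun X Y => X.ElemMove Y ∧ Y.G.Reduced)

/-- A reduced labeled graph is non-ascending if no reduced labeled graph obtained from it
by slide, induction and A-moves (all intermediate graphs reduced) contains a
strict ascending loop. -/
def LGraph.NonAscending {V E : Type} (G : LGraph V E) : Prop :=
  ∀ Y : BGraph, BGraph.MoveSeq ⟨V, E, G⟩ Y → ¬ Y.G.HasStrictAscendingLoop

/-!
Say that `(v, a)` transports to `(w, b)` when a half-edge labelled `a` at `v` can be slid along
fixed edges until it is labelled `b` at `w`. Transport is symmetric and scales with the labels.

In a non-ascending graph, if the origin `(o e, λ(e))` of an edge transports, off `e`, to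
`(t e, n λ(ē))`, then `n = 1`: sliding `e` accordingly makes it a loop whose labels have ratio `n`,
and an inverse A-move expands such a loop to a loop with labels `1` and `n`. Were `e` mobile, the
cycle witnessing mobility would be such a transport with `n ≠ 1`, or would give one after
composition with a second transport of the same kind. So for mobile `e` there is none at all.

Each of the three slide sequences yields one. In (1), `f` moves over `B` to the new origin of `e`,
from where reversing `A'` leads to the terminus of `f`; in (2) and (3), `e` moves over `A` (and
over `f̄`) to the origin of `f`, from where `B` leads to the terminus of `e`.
-/

namespace LGraph

variable {V E : Type} {G : LGraph V E} {e f x : E}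

theorem bar_involutive (G : LGraph V E) : Function.Involutive G.bar := G.bar_bar

theorem t_bar (G : LGraph V E) (x : E) : G.t (G.bar x) = G.o x := by rw [t, bar_bar]

/-- The oriented edges lying outside the unoriented edge `{e, ē}`. -/
def away (G : LGraph V E) (e : E) : Set E := {x | x ≠ e ∧ x ≠ G.bar e}

theorem bar_mem_away : G.bar x ∈ G.away e ↔ x ∈ G.away e := by
  simp only [away, Set.mem_ofPred_eq, ne_eq, G.bar_involutive.eq_iff, G.bar_bar, and_comm]

theorem away_bar (G : LGraph V E) (e : E) : G.away (G.bar e) = G.away e := by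
  ext x
  simp only [away, Set.mem_ofPred_eq, G.bar_bar, and_comm]

/-! ### Transport of labels -/

/-- One step of label transport: a half-edge with label `a = k λ(x)` at the origin of an edge
`x ∈ S` slides over `x` and becomes a half-edge with label `k λ(x̄)` at its terminus. -/
def LabelStep (G : LGraph V E) (S : Set E) (p q : V × ℤ) : Prop :=
  ∃ x ∈ S, ∃ k : ℤ, p = (G.o x, k * G.lab x) ∧ q = (G.t x, k * G.lab (G.bar x))

/-- Label transport along the edges in `S`: the pair `(v, a)` of a vertex and a label is related to
`(w, b)` if a half-edge labelled `a` at `v` can be slid over edges of `S` to become labelled `b`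
at `w`. Only the existence of a path is recorded, not the path. -/
def Transport (G : LGraph V E) (S : Set E) : V × ℤ → V × ℤ → Prop :=
  Relation.ReflTransGen (G.LabelStep S)

section Transport

variable {S T : Set E} {p q : V × ℤ}

theorem transport_of_mem (hx : x ∈ S) (k : ℤ) :
    G.Transport S (G.o x, k * G.lab x) (G.t x, k * G.lab (G.bar x)) :=
  .single ⟨x, hx, k, rfl, rfl⟩

theorem Transport.mono (hST : S ⊆ T) (h : G.Transport S p q) : G.Transport T p q :=
  Relation.ReflTransGen.mono (fun _ _ ⟨x, hx, hstep⟩ => ⟨x, hST hx, hstep⟩) _ _ h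

theorem Transport.symm (hS : ∀ x ∈ S, G.bar x ∈ S) (h : G.Transport S p q) :
    G.Transport S q p := by
  have hstep : Std.Symm (G.LabelStep S) := by
    refine ⟨?_⟩
    rintro _ _ ⟨x, hx, k, rfl, rfl⟩
    exact ⟨G.bar x, hS x hx, k, rfl, by rw [G.t_bar, G.bar_bar]⟩
  exact Relation.ReflTransGen.stdSymm.symm _ _ h

theorem Transport.scale {v w : V} {a b : ℤ} (h : G.Transport S (v, a) (w, b)) (m : ℤ) :
    G.Transport S (v, m * a) (w, m * b) := by
  refine Relation.ReflTransGen.lift (fun p : V × ℤ => (p.1, m * p.2)) ?_ _ _ h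
  rintro _ _ ⟨x, hx, k, rfl, rfl⟩
  exact ⟨x, hx, m * k, by simp only [mul_assoc], by simp only [mul_assoc]⟩

theorem Transport.snd_pos (hpos : G.Positive) (h : G.Transport S p q) (hp : 0 < p.2) :
    0 < q.2 := by
  induction h with
  | refl => exact hp
  | tail _ hstep ih =>
    obtain ⟨x, -, k, rfl, rfl⟩ := hstep
    exact mul_pos (pos_of_mul_pos_left ih (hpos x).le) (hpos _)

end Transport

/-! ### Reattaching an edge -/

open Classical in
/-- The graph in which the origin of `e` is moved to the vertex `p.1` and `e` is relabelled by
`p.2`. Every sequence of slides of `e` has this form. -/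
noncomputable def reattach (G : LGraph V E) (e : E) (p : V × ℤ) : LGraph V E where
  o := fun x => if x = e then p.1 else G.o x
  bar := G.bar
  bar_bar := G.bar_bar
  bar_ne := G.bar_ne
  lab := fun x => if x = e then p.2 else G.lab x

section Reattach

variable {p q : V × ℤ}

theorem reattach_o_self : (G.reattach e p).o e = p.1 := if_pos rfl

theorem reattach_lab_self : (G.reattach e p).lab e = p.2 := if_pos rfl

theorem reattach_o_of_ne (h : x ≠ e) : (G.reattach e p).o x = G.o x := if_neg h

theorem reattach_lab_of_ne (h : x ≠ e) : (G.reattach e p).lab x = G.lab x := if_neg h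

theorem reattach_t_of_ne (h : x ≠ G.bar e) : (G.reattach e p).t x = G.t x :=
  reattach_o_of_ne (mt G.bar_involutive.eq_iff.1 h)

theorem reattach_lab_bar_of_ne (h : x ≠ G.bar e) :
    (G.reattach e p).lab (G.bar x) = G.lab (G.bar x) :=
  reattach_lab_of_ne (mt G.bar_involutive.eq_iff.1 h)

theorem reattach_eq_self (G : LGraph V E) (e : E) : G.reattach e (G.o e, G.lab e) = G := by
  simp only [reattach, ← apply_ite, ite_eq_right_iff.2 Eq.symm]

theorem reattach_reattach : (G.reattach e p).reattach e q = G.reattach e q := by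
  simp only [reattach]
  congr 1 <;> funext x <;> split_ifs <;> rfl

theorem transport_reattach {S : Set E} (hS : S ⊆ G.away e) :
    (G.reattach e p).Transport S = G.Transport S := by
  suffices (G.reattach e p).LabelStep S = G.LabelStep S by rw [Transport, Transport, this]
  ext q r
  refine exists_congr fun x => and_congr_right fun hx => ?_
  obtain ⟨hxe, hxbar⟩ := hS hx
  rw [reattach_o_of_ne hxe, reattach_lab_of_ne hxe, reattach_t_of_ne hxbar]
  exact exists_congr fun k => by rw [← reattach_lab_bar_of_ne hxbar]; rfl

theorem Positive.reattach (hpos : G.Positive) (hp : 0 < p.2) : (G.reattach e p).Positive := by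
  intro x
  by_cases hx : x = e
  · rwa [hx, reattach_lab_self]
  · rw [reattach_lab_of_ne hx]
    exact hpos x

theorem Reduced.reattach (hred : G.Reduced) (hbar : G.lab (G.bar e) ≠ 1) (hp : p.2 ≠ 1) :
    (G.reattach e p).Reduced := by
  intro x hx
  have hxe : x ≠ e := by
    rintro rfl
    exact hp (reattach_lab_self.symm.trans hx)
  rw [reattach_lab_of_ne hxe] at hx
  have hxbar : x ≠ G.bar e := by
    rintro rfl
    exact hbar hx
  rw [reattach_o_of_ne hxe, reattach_t_of_ne hxbar]
  exact hred x hx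

end Reattach

/-! ### Slides -/

section Slide

variable {l l' : List E} {p : V × ℤ}

theorem canSlide_reattach :
    (G.reattach e p).CanSlide e x ↔ x ∈ G.away e ∧ ∃ k : ℤ, p = (G.o x, k * G.lab x) := by
  rw [CanSlide, reattach_o_self, reattach_lab_self, ← and_assoc]
  refine and_congr_right fun hx => ?_
  rw [reattach_o_of_ne hx.1, reattach_lab_of_ne hx.1, dvd_iff_exists_eq_mul_left]
  simp only [Prod.ext_iff, exists_and_left, eq_comm]

theorem slide_reattach (hpos : G.Positive) (hx : x ∈ G.away e) (k : ℤ) :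
    (G.reattach e (G.o x, k * G.lab x)).slide e x =
      G.reattach e (G.t x, k * G.lab (G.bar x)) := by
  have hslide (H : LGraph V E) :
      H.slide e x = H.reattach e (H.t x, H.lab e * H.lab (H.bar x) / H.lab x) := rfl
  have hbar (p : V × ℤ) : (G.reattach e p).lab ((G.reattach e p).bar x) = G.lab (G.bar x) :=
    reattach_lab_bar_of_ne hx.2
  rw [hslide, reattach_reattach, reattach_t_of_ne hx.2, reattach_lab_self,
    reattach_lab_of_ne hx.1, hbar, mul_right_comm, Int.mul_ediv_cancel _ (hpos x).ne']

theorem GoodSlidePath.canSlidePath (h : G.GoodSlidePath e l) : G.CanSlidePath e l := by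
  induction l generalizing G with
  | nil => trivial
  | cons _ _ ih => exact ⟨h.1, ih h.2.2⟩

theorem slidePath_append :
    G.slidePath e (l ++ l') = (G.slidePath e l).slidePath e l' := by
  induction l generalizing G with
  | nil => rfl
  | cons _ _ ih => exact ih

theorem canSlidePath_append :
    G.CanSlidePath e (l ++ l') ↔ G.CanSlidePath e l ∧ (G.slidePath e l).CanSlidePath e l' := by
  induction l generalizing G with
  | nil => exact (true_and _).symm.to_iff
  | cons _ _ ih => exact (and_congr_right fun _ => ih).trans and_assoc.symm

theorem CanSlidePath.exists_transport (hpos : G.Positive)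
    (h : (G.reattach e p).CanSlidePath e l) :
    ∃ q, G.Transport ({x | x ∈ l} ∩ G.away e) p q ∧
      (G.reattach e p).slidePath e l = G.reattach e q := by
  induction l generalizing p with
  | nil => exact ⟨p, .refl, rfl⟩
  | cons y l ih =>
    obtain ⟨hslide, hl⟩ := h
    obtain ⟨hy, k, rfl⟩ := canSlide_reattach.1 hslide
    rw [slide_reattach hpos hy] at hl
    obtain ⟨q, htrans, hq⟩ := ih hl
    refine ⟨q, ?_, by rw [slidePath, slide_reattach hpos hy, hq]⟩
    have hstep := G.transport_of_mem (S := {x | x ∈ y :: l} ∩ G.away e)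
      ⟨List.mem_cons_self, hy⟩ k
    exact hstep.trans (htrans.mono fun x hx => ⟨List.mem_cons_of_mem y hx.1, hx.2⟩)

theorem CanSlidePath.positive_slidePath (hpos : G.Positive) (h : G.CanSlidePath e l) :
    (G.slidePath e l).Positive := by
  rw [← G.reattach_eq_self e] at h ⊢
  obtain ⟨q, htrans, hq⟩ := h.exists_transport hpos
  rw [hq]
  exact hpos.reattach (htrans.snd_pos hpos (hpos e))

theorem CanSlidePath.exists_transport_append_cons (hpos : G.Positive)
    (h : G.CanSlidePath e (l ++ x :: l')) :
    x ∈ G.away e ∧ ∃ (m : ℤ) (q : V × ℤ),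
      G.Transport ({y | y ∈ l} ∩ G.away e) (G.o e, G.lab e) (G.o x, m * G.lab x) ∧
      G.Transport ({y | y ∈ l'} ∩ G.away e) (G.t x, m * G.lab (G.bar x)) q ∧
      G.slidePath e (l ++ x :: l') = G.reattach e q := by
  obtain ⟨hl, hrest⟩ := canSlidePath_append.1 h
  rw [← G.reattach_eq_self e] at hl
  obtain ⟨r, htrans, hr⟩ := hl.exists_transport hpos
  rw [G.reattach_eq_self] at hr
  rw [hr] at hrest
  obtain ⟨hslide, hl'⟩ := hrest
  obtain ⟨hx, m, rfl⟩ := canSlide_reattach.1 hslide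
  rw [slide_reattach hpos hx] at hl'
  obtain ⟨q, htrans', hq⟩ := hl'.exists_transport hpos
  refine ⟨hx, m, q, htrans, htrans', ?_⟩
  rw [slidePath_append, hr, slidePath, slide_reattach hpos hx, hq]

end Slide

/-! ### Non-ascending graphs -/

section NonAscending

variable {p q : V × ℤ} {c : E} {n : ℤ}

theorem isom_refl (G : LGraph V E) : G.Isom G :=
  ⟨id, id, Function.bijective_id, Function.bijective_id, fun _ => rfl, fun _ => rfl, fun _ => rfl⟩

theorem NonAscending.lab_bar_eq_one (hna : G.NonAscending) (hred : G.Reduced)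
    (hx : G.lab x = 1) : G.lab (G.bar x) = 1 :=
  by_contra fun h => hna _ .refl ⟨x, hred x hx, hx, h⟩

theorem NonAscending.snd_eq_one_of_labelStep (hna : G.NonAscending) (hred : G.Reduced)
    (hpos : G.Positive) {S : Set E} (h : G.LabelStep S p q) (hp : p.2 = 1) : q.2 = 1 := by
  obtain ⟨x, -, k, rfl, rfl⟩ := h
  have hx : G.lab x = 1 := Int.eq_one_of_dvd_one (hpos x).le (Dvd.intro_left k hp)
  have hk : k = 1 := by simpa only [hx, mul_one] using hp
  rw [hk, one_mul, hna.lab_bar_eq_one hred hx]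

theorem NonAscending.snd_eq_one_of_transport (hna : G.NonAscending) (hred : G.Reduced)
    (hpos : G.Positive) {S : Set E} (h : G.Transport S p q) (hp : p.2 = 1) : q.2 = 1 := by
  induction h with
  | refl => exact hp
  | tail _ hstep ih => exact hna.snd_eq_one_of_labelStep hred hpos hstep ih

theorem isSlideMove_reattach (hpos : G.Positive) (h : G.LabelStep (G.away e) p q) :
    IsSlideMove (G.reattach e p) (G.reattach e q) := by
  obtain ⟨x, hx, k, rfl, rfl⟩ := h
  refine ⟨e, x, canSlide_reattach.2 ⟨hx, k, rfl⟩, ?_⟩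
  rw [slide_reattach hpos hx]
  exact isom_refl _

theorem NonAscending.moveSeq_reattach (hna : G.NonAscending) (hred : G.Reduced)
    (hpos : G.Positive) (hbar : G.lab (G.bar e) ≠ 1)
    (h : G.Transport (G.away e) (G.o e, G.lab e) p) (hp : p.2 ≠ 1) :
    BGraph.MoveSeq ⟨V, E, G⟩ ⟨V, E, G.reattach e p⟩ := by
  induction h with
  | refl =>
    rw [reattach_eq_self]
    exact .refl
  | tail _ hstep ih =>
    have hp' := mt (hna.snd_eq_one_of_labelStep hred hpos hstep) hp
    exact (ih hp').tail ⟨.inl (isSlideMove_reattach hpos hstep), hred.reattach hbar hp⟩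

open Classical in
/-- The result of the inverse A-move at a loop `c` with `λ(c̄) = n λ(c)`: the loop is moved to a new
vertex `none` and relabelled by `1` and `n`, and the new vertex is joined to the base of `c` by
the edge `Sum.inr true`, labelled by `n` at `none` and by `λ(c)` at the base. -/
noncomputable def expandLoop (G : LGraph V E) (c : E) (n : ℤ) :
    LGraph (Option V) (E ⊕ Bool) where
  o := Sum.elim (fun x => if x = c ∨ x = G.bar c then none else some (G.o x))
    (fun b => if b then none else some (G.o c))
  bar := Sum.map G.bar not
  bar_bar := by rintro (x | b) <;> simp [G.bar_bar]
  bar_ne := by rintro (x | b) <;> simp [G.bar_ne]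
  lab := Sum.elim (fun x => if x = c then 1 else if x = G.bar c then n else G.lab x)
    (fun b => if b then n else G.lab c)

theorem hasStrictAscendingLoop_expandLoop (hn : n ≠ 1) :
    (G.expandLoop c n).HasStrictAscendingLoop :=
  ⟨.inl c, by simp [expandLoop, t], by simp [expandLoop], by simp [expandLoop, G.bar_ne, hn]⟩

theorem Reduced.expandLoop (hred : G.Reduced) (hc : G.lab c ≠ 1) (hn : n ≠ 1) :
    (G.expandLoop c n).Reduced := by
  rintro (x | b) hx
  · by_cases hxc : x ∈ G.away c
    · have hred_x : G.lab x = 1 → G.o x = G.o (G.bar x) := hred x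
      have hxbar := bar_mem_away.2 hxc
      simp_all [LGraph.expandLoop, t, away]
    · rw [away, Set.mem_ofPred_eq, not_and_or, not_not, not_not] at hxc
      rcases hxc with rfl | rfl <;> simp [LGraph.expandLoop, t, G.bar_bar]
  · cases b <;> simp [LGraph.expandLoop, hc, hn] at hx

theorem expandLoop_o_eq_none_iff {y : E ⊕ Bool} :
    (G.expandLoop c n).o y = none ↔ y = .inl c ∨ y = .inl (G.bar c) ∨ y = .inr true := by
  rcases y with x | _ | _ <;> simp [expandLoop, or_iff_not_imp_left]

theorem exists_mem_away_eq_inl {y : E ⊕ Bool} (hc : y ≠ .inl c)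
    (hcbar : y ≠ (G.expandLoop c n).bar (.inl c)) (hd : y ≠ .inr true)
    (hdbar : y ≠ (G.expandLoop c n).bar (.inr true)) : ∃ x ∈ G.away c, y = .inl x := by
  rcases y with x | _ | _
  · exact ⟨x, ⟨mt (congrArg _) hc, mt (congrArg _) hcbar⟩, rfl⟩
  · exact absurd rfl hdbar
  · exact absurd rfl hd

theorem isAMove_expandLoop (hloop : G.o c = G.t c) (hlab : G.lab (G.bar c) = n * G.lab c)
    (hc : G.lab c ≠ 1) (hn : n ≠ 1) : IsAMove (G.expandLoop c n) G := by
  have hbar : G.bar c ≠ c := G.bar_ne c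
  have hnone : (G.expandLoop c n).o (.inl c) = none := expandLoop_o_eq_none_iff.2 (.inl rfl)
  refine ⟨.inl c, .inr true, c, fun v => v.getD (G.o c), Sum.elim id fun _ => c,
    by simp [expandLoop, t], by simp [expandLoop], by simp [expandLoop, hbar, hn],
    by simp [expandLoop], by simp [expandLoop, t], by simp [expandLoop, hn],
    by simp [expandLoop, hc], by simp [expandLoop, hbar],
    fun x hx => expandLoop_o_eq_none_iff.1 (hx.trans hnone), by simp [expandLoop, t],
    by simp [expandLoop, t, hloop], by simp [expandLoop],
    by simp [expandLoop, hbar, hlab, mul_comm], ?_, ?_, ?_, ?_, ?_⟩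
  · simp only [hnone, Option.ne_none_iff_exists']
    rintro _ _ ⟨w₁, rfl⟩ ⟨w₂, rfl⟩ h
    exact congrArg some h
  · exact fun v => ⟨some v, by simp [hnone], rfl⟩
  · intro y hy hybar hd hdbar
    obtain ⟨x, ⟨hx, hxbar⟩, rfl⟩ := exists_mem_away_eq_inl hy hybar hd hdbar
    simp [expandLoop, hx, hxbar]
  · intro y z hy hybar hyd hydbar hz hzbar hzd hzdbar h
    obtain ⟨x, -, rfl⟩ := exists_mem_away_eq_inl hy hybar hyd hydbar
    obtain ⟨w, -, rfl⟩ := exists_mem_away_eq_inl hz hzbar hzd hzdbar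
    exact congrArg Sum.inl h
  · exact fun y hy hybar => ⟨.inl y, by simpa using hy, by simpa [expandLoop] using hybar,
      by simp, by simp [expandLoop], rfl⟩

theorem NonAscending.eq_one_of_loop (hna : G.NonAscending) (hred : G.Reduced)
    (hloop : G.o c = G.t c) (hlab : G.lab (G.bar c) = n * G.lab c) : n = 1 := by
  by_contra hn
  by_cases hc : G.lab c = 1
  · exact hn (by rwa [hna.lab_bar_eq_one hred hc, hc, mul_one, eq_comm] at hlab)
  · have hmove : BGraph.ElemMove ⟨V, E, G⟩ ⟨_, _, G.expandLoop c n⟩ :=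
      .inr (.inr (.inr (.inr (isAMove_expandLoop hloop hlab hc hn))))
    exact hna _ (.single ⟨hmove, hred.expandLoop hc hn⟩) (hasStrictAscendingLoop_expandLoop hn)

theorem NonAscending.eq_one_of_transport (hna : G.NonAscending) (hred : G.Reduced)
    (hpos : G.Positive)
    (h : G.Transport (G.away e) (G.o e, G.lab e) (G.t e, n * G.lab (G.bar e))) : n = 1 := by
  by_contra hn
  have hend : n * G.lab (G.bar e) ≠ 1 := fun h1 => hn <| by
    have hbar := Int.eq_one_of_dvd_one (hpos (G.bar e)).le (Dvd.intro_left n h1)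
    rwa [hbar, mul_one] at h1
  have hbar : G.lab (G.bar e) ≠ 1 := fun hbar => by
    have he : G.lab e = 1 := G.bar_bar e ▸ hna.lab_bar_eq_one hred hbar
    exact hend (hna.snd_eq_one_of_transport hred hpos h he)
  have hmoves := hna.moveSeq_reattach hred hpos hbar h hend
  have hna' : (G.reattach e (G.t e, n * G.lab (G.bar e))).NonAscending :=
    fun Y hY => hna Y (hmoves.trans hY)
  refine hn (hna'.eq_one_of_loop (hred.reattach hbar hend) (c := G.bar e) ?_ ?_)
  · have hbase : (G.reattach e (G.t e, n * G.lab (G.bar e))).t (G.bar e) = G.t e :=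
      (t_bar _ e).trans reattach_o_self
    rw [reattach_o_of_ne (G.bar_ne e), hbase, t]
  · rw [reattach_lab_of_ne (G.bar_ne e)]
    exact (congrArg _ (G.bar_bar e)).trans reattach_lab_self

end NonAscending

/-! ### Mobile edges -/

section Mobile

variable {l : List E}

theorem q_append_singleton (G : LGraph V E) (l : List E) (x : E) :
    G.q (l ++ [x]) = G.q l * G.qe x := by
  rw [q, q, List.map_append, List.prod_append, List.map_singleton, List.prod_singleton]

theorem IsEEdgePath.of_append_singleton (h : G.IsEEdgePath e (l ++ [x])) :
    G.IsEEdgePath e l ∧ x ∈ G.away e ∧ G.o x = G.t (l.getLastD (G.bar e)) ∧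
      ∃ k : ℤ, (G.lab e : ℚ) * G.q l = k * G.lab x := by
  obtain ⟨hpath, haway, hhead, hdvd⟩ := h
  obtain ⟨hl, -, hlast⟩ := List.isChain_append.1 hpath
  refine ⟨⟨hl, fun a ha => haway a (List.mem_append_left _ ha), ?_, fun i => ?_⟩,
    haway x List.mem_concat_self, ?_, ?_⟩
  · cases l with
    | nil => simp
    | cons a l => simpa using hhead
  · simpa [List.take_append_of_le_length i.2.le] using
      hdvd ⟨i, i.2.trans (by simp)⟩
  · rcases l.eq_nil_or_concat' with rfl | ⟨l, a, rfl⟩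
    · rw [List.getLastD_nil, t_bar]
      exact hhead x rfl
    · rw [List.getLastD_concat]
      exact (hlast a (List.getLast?_concat ..) x rfl).symm
  · simpa using hdvd ⟨l.length, by simp⟩

theorem IsEEdgePath.exists_transport (hpos : G.Positive) (h : G.IsEEdgePath e l) :
    ∃ b : ℤ, (b : ℚ) = G.lab e * G.q l ∧
      G.Transport (G.away e) (G.o e, G.lab e) (G.t (l.getLastD (G.bar e)), b) := by
  induction l using List.reverseRecOn with
  | nil => exact ⟨G.lab e, by simp [q], by rw [List.getLastD_nil, t_bar]; exact .refl⟩
  | append_singleton l x ih =>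
    obtain ⟨hl, hx, hox, k, hk⟩ := h.of_append_singleton
    obtain ⟨b, hb, htrans⟩ := ih hl
    have hbk : b = k * G.lab x := by exact_mod_cast hb.trans hk
    have hx0 : (G.lab x : ℚ) ≠ 0 := Int.cast_ne_zero.2 (hpos x).ne'
    refine ⟨k * G.lab (G.bar x), ?_, ?_⟩
    · rw [q_append_singleton, ← mul_assoc, hk, qe, mul_assoc, mul_div_cancel₀ _ hx0, Int.cast_mul]
    · rw [← hox, hbk] at htrans
      rw [List.getLastD_concat]
      exact htrans.trans (transport_of_mem hx k)

theorem NonAscending.not_isStrictMonotoneCycle (hna : G.NonAscending) (hred : G.Reduced)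
    (hpos : G.Positive) : ¬ G.IsStrictMonotoneCycle l e := by
  rintro ⟨⟨hpath, hend, k, hk⟩, hne⟩
  obtain ⟨b, hb, htrans⟩ := hpath.exists_transport hpos
  have he0 : (G.lab e : ℚ) ≠ 0 := Int.cast_ne_zero.2 (hpos e).ne'
  have hbk : b = k * G.lab e := by
    have hq : (b : ℚ) = k * G.lab e := by
      rw [← hk, q_append_singleton, qe, mul_assoc, div_mul_cancel₀ _ he0, hb, mul_comm]
    exact_mod_cast hq
  rw [G.bar_bar, hend, hbk] at htrans
  have hk1 : k = 1 :=
    hna.eq_one_of_transport hred hpos (e := G.bar e) (by rwa [t_bar, G.bar_bar])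
  exact hne (by rw [hk, hk1, Int.cast_one])

theorem IsStrictIntegerCycle.exists_transport (hpos : G.Positive)
    (h : G.IsStrictIntegerCycle e l) :
    ∃ n : ℤ, n ≠ 1 ∧ G.Transport (G.away e) (G.o e, G.lab e) (G.o e, n * G.lab e) := by
  obtain ⟨hpath, hnil, hend, ⟨n, hn⟩, hne⟩ := h
  obtain ⟨b, hb, htrans⟩ := hpath.exists_transport hpos
  obtain ⟨a, l, rfl⟩ := List.exists_cons_of_ne_nil hnil
  rw [List.headD_cons, hpath.2.2.1 a rfl] at hend
  have hbn : b = n * G.lab e := by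
    rw [hn, mul_comm] at hb
    exact_mod_cast hb
  refine ⟨n, fun hn1 => hne (by rw [hn, hn1, Int.cast_one]), ?_⟩
  rw [List.getLastD_cons] at hend htrans
  rwa [hend, hbn] at htrans

theorem Mobile.not_transport (hme : G.Mobile e) (hna : G.NonAscending) (hred : G.Reduced)
    (hpos : G.Positive) (m : ℤ) :
    ¬ G.Transport (G.away e) (G.o e, G.lab e) (G.t e, m * G.lab (G.bar e)) := by
  intro h
  obtain rfl : m = 1 := hna.eq_one_of_transport hred hpos h
  rw [one_mul] at h
  rcases hme with ⟨l, hl | hl⟩ | ⟨l, hl | hl⟩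
  · exact hna.not_isStrictMonotoneCycle hred hpos hl
  · exact hna.not_isStrictMonotoneCycle hred hpos hl
  · obtain ⟨n, hn, hcycle⟩ := hl.exists_transport hpos
    exact hn (hna.eq_one_of_transport hred hpos (hcycle.trans (h.scale n)))
  · obtain ⟨n, hn, hcycle⟩ := hl.exists_transport hpos
    rw [away_bar] at hcycle
    exact hn (hna.eq_one_of_transport hred hpos (h.trans hcycle))

end Mobile

/-! ### The three slide sequences -/

section TwoSlides

variable {A A' B B' : List E} {y : E} {p : V × ℤ}

theorem CanSlidePath.exists_transport_of_reattach (hpos : (G.reattach e p).Positive)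
    (hfe : f ∈ G.away e) (hB : ∀ x ∈ B, x ∈ G.away e)
    (h : (G.reattach e p).CanSlidePath f (B ++ y :: B')) :
    ∃ k : ℤ, G.Transport ({x | x ∈ B} ∩ G.away f) (G.o f, G.lab f)
      ((G.reattach e p).o y, k * (G.reattach e p).lab y) := by
  obtain ⟨-, k, -, htrans, -⟩ := h.exists_transport_append_cons hpos
  rw [reattach_o_of_ne hfe.1, reattach_lab_of_ne hfe.1,
    transport_reattach fun x hx => hB x hx.1] at htrans
  exact ⟨k, htrans⟩

theorem Mobile.not_canSlidePath_over_self (hmf : G.Mobile f) (hna : G.NonAscending)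
    (hred : G.Reduced) (hpos : G.Positive) (hA' : ∀ x ∈ A', x ∈ G.away f)
    (hB : ∀ x ∈ B, x ∈ G.away e) (h : G.CanSlidePath e (A ++ f :: A')) :
    ¬ (G.slidePath e (A ++ f :: A')).CanSlidePath f (B ++ e :: B') := by
  intro h'
  have hpos' := h.positive_slidePath hpos
  obtain ⟨hfe, m, q, -, htransA', hq⟩ := h.exists_transport_append_cons hpos
  rw [hq] at h' hpos'
  obtain ⟨k, htransB⟩ := h'.exists_transport_of_reattach hpos' hfe hB
  rw [reattach_o_self, reattach_lab_self] at htransB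
  have hback : G.Transport (G.away f) q (G.t f, m * G.lab (G.bar f)) :=
    (htransA'.mono fun x hx => hA' x hx.1).symm fun _ => bar_mem_away.2
  refine hmf.not_transport hna hred hpos (k * m) ?_
  rw [mul_assoc]
  exact (htransB.mono Set.inter_subset_right).trans (hback.scale k)

theorem Mobile.not_canSlidePath_over_bar (hme : G.Mobile e) (hna : G.NonAscending)
    (hred : G.Reduced) (hpos : G.Positive) (hpos' : (G.reattach e p).Positive)
    (hfe : f ∈ G.away e) (hB : ∀ x ∈ B, x ∈ G.away e) {m : ℤ}
    (h : G.Transport (G.away e) (G.o e, G.lab e) (G.o f, m * G.lab f)) :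
    ¬ (G.reattach e p).CanSlidePath f (B ++ G.bar e :: B') := by
  intro h'
  obtain ⟨k, htransB⟩ := h'.exists_transport_of_reattach hpos' hfe hB
  rw [reattach_o_of_ne (G.bar_ne e), reattach_lab_of_ne (G.bar_ne e)] at htransB
  refine hme.not_transport hna hred hpos (m * k) ?_
  rw [mul_assoc]
  exact h.trans ((htransB.mono fun x hx => hB x hx.1).scale m)

end TwoSlides

end LGraph

theorem stmt12_general {V E : Type} {G : LGraph V E} (hpos : G.Positive) (hred : G.Reduced)
    (hna : G.NonAscending) {e f : E} (hme : G.Mobile e) (hmf : G.Mobile f) {A A' B B' : List E}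
    (hA' : ∀ x ∈ A', x ∈ G.away f) (hB : ∀ x ∈ B, x ∈ G.away e) :
    (¬ (G.CanSlidePath e (A ++ f :: A') ∧
        (G.slidePath e (A ++ f :: A')).CanSlidePath f (B ++ e :: B'))) ∧
    (¬ (G.CanSlidePath e (A ++ f :: A') ∧
        (G.slidePath e (A ++ f :: A')).CanSlidePath f (B ++ G.bar e :: B'))) ∧
    (¬ (G.CanSlidePath e (A ++ G.bar f :: A') ∧
        (G.slidePath e (A ++ G.bar f :: A')).CanSlidePath f (B ++ G.bar e :: B'))) := by
  refine ⟨fun ⟨h, h'⟩ => hmf.not_canSlidePath_over_self hna hred hpos hA' hB h h',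
    fun ⟨h, h'⟩ => ?_, fun ⟨h, h'⟩ => ?_⟩
  · have hpos' := h.positive_slidePath hpos
    obtain ⟨hfe, m, q, htransA, -, hq⟩ := h.exists_transport_append_cons hpos
    rw [hq] at h' hpos'
    exact hme.not_canSlidePath_over_bar hna hred hpos hpos' hfe hB
      (htransA.mono Set.inter_subset_right) h'
  · have hpos' := h.positive_slidePath hpos
    obtain ⟨hfe, m, q, htransA, -, hq⟩ := h.exists_transport_append_cons hpos
    rw [hq] at h' hpos'
    have htrans := (htransA.mono Set.inter_subset_right).trans (LGraph.transport_of_mem hfe m)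
    rw [G.t_bar, G.bar_bar] at htrans
    exact hme.not_canSlidePath_over_bar hna hred hpos hpos' (LGraph.bar_mem_away.1 hfe) hB
      htrans h'

/-- (Lemma 4.4(o),(p),(q)) In a reduced non-ascending positively-labeled
graph, for mobile edges `e, f` with `f ∉ {e, ē}` and paths `A, A', B, B'` avoiding
`{e, ē, f, f̄}`, none of the two-step sequences
`e/AfA'·f/BeB'`, `e/AfA'·f/BēB'`, `e/Af̄A'·f/BēB'` can be performed with all single slides
valid and all intermediate graphs reduced. -/
theorem stmt12 {V E : Type} [Finite V] [Finite E] (G : LGraph V E)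
    (hpos : G.Positive) (hred : G.Reduced) (hna : G.NonAscending)
    (e f : E) (hme : G.Mobile e) (hmf : G.Mobile f)
    (hfe : f ≠ e) (hfebar : f ≠ G.bar e)
    (A A' B B' : List E)
    (hA : ∀ x ∈ A, x ≠ e ∧ x ≠ G.bar e ∧ x ≠ f ∧ x ≠ G.bar f)
    (hA' : ∀ x ∈ A', x ≠ e ∧ x ≠ G.bar e ∧ x ≠ f ∧ x ≠ G.bar f)
    (hB : ∀ x ∈ B, x ≠ e ∧ x ≠ G.bar e ∧ x ≠ f ∧ x ≠ G.bar f)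
    (hB' : ∀ x ∈ B', x ≠ e ∧ x ≠ G.bar e ∧ x ≠ f ∧ x ≠ G.bar f) :
    (¬ (G.GoodSlidePath e (A ++ f :: A') ∧
        (G.slidePath e (A ++ f :: A')).GoodSlidePath f (B ++ e :: B'))) ∧
    (¬ (G.GoodSlidePath e (A ++ f :: A') ∧
        (G.slidePath e (A ++ f :: A')).GoodSlidePath f (B ++ G.bar e :: B'))) ∧
    (¬ (G.GoodSlidePath e (A ++ G.bar f :: A') ∧
        (G.slidePath e (A ++ G.bar f :: A')).GoodSlidePath f (B ++ G.bar e :: B'))) := by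
  have ⟨h₁, h₂, h₃⟩ := stmt12_general hpos hred hna hme hmf (A := A) (B' := B')
    (fun x hx => (hA' x hx).2.2) (fun x hx => ⟨(hB x hx).1, (hB x hx).2.1⟩)
  exact ⟨fun h => h₁ (h.imp (·.canSlidePath) (·.canSlidePath)),
    fun h => h₂ (h.imp (·.canSlidePath) (·.canSlidePath)),
    fun h => h₃ (h.imp (·.canSlidePath) (·.canSlidePath))⟩
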